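/- Let n ∈ O_K be primary and not a perfect square, and let χ̃_n be the Dirichlet character modulo 2n defined by χ̃_n = ψ_j · (·/n) when n is of type j (j = 1, 2), regarded as a Hecke character modulo 2n of trivial infinite type. Then (as an identity of meromorphic functions of s, the series on the right converging in a suitable half-plane and continuing meromorphically) L(s, χ̃_n) = N(2n)^{−s} · π^{−(1−2s)} · (Γ(1−s)/(4Γ(s))) · ∑_{0 ≠ k ∈ O_K} g(k, χ̃_n)/N(k)^{1−s}. -/

import Mathlib

open Complex Real Filter Topology
open scoped BigOperators Classical

noncomputable section

/-- The norm `N(n)` of a Gaussian integer, as a real number. -/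
def Nm (n : GaussianInt) : ℝ := ((Zsqrtd.norm n : ℤ) : ℝ)

/-- The element `1 + i` of `ℤ[i]`. -/
def ωg : GaussianInt := ⟨1, 1⟩

/-- The element `i` of `ℤ[i]`. -/
def ig : GaussianInt := ⟨0, 1⟩

/-- `n` is primary: `n ≡ 1 mod (1+i)³`. -/
def IsPrimary (n : GaussianInt) : Prop := ωg ^ 3 ∣ (n - 1)

/-- `ẽ(z) = exp(2πi(z/(2i) − z̄/(2i)))`. -/
def eT (z : ℂ) : ℂ :=
  Complex.exp (2 * (Real.pi : ℂ) * Complex.I *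
    (z / (2 * Complex.I) - (starRingEnd ℂ) z / (2 * Complex.I)))

/-- `χ a n = (a/n)` is the quadratic residue symbol of `ℤ[i]`: on odd primes `ϖ` it is
the `±1` (or `0`) value determined by `(a/ϖ) ≡ a^((N(ϖ)-1)/2) mod ϖ`, it is extended
multiplicatively in the denominator over odd elements, and equals `1` on units. -/
structure IsQuadSym (χ : GaussianInt → GaussianInt → ℤ) : Prop where
  val_prime : ∀ ϖ a : GaussianInt, Prime ϖ → ¬ ωg ∣ ϖ → ¬ ϖ ∣ a →
    (χ a ϖ = 1 ∨ χ a ϖ = -1) ∧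
      ϖ ∣ (a ^ (((Zsqrtd.norm ϖ).toNat - 1) / 2) - (χ a ϖ : GaussianInt))
  zero_of_dvd : ∀ ϖ a : GaussianInt, Prime ϖ → ϖ ∣ a → χ a ϖ = 0
  mul_den : ∀ a m n : GaussianInt, ¬ ωg ∣ m → ¬ ωg ∣ n → χ a (m * n) = χ a m * χ a n
  unit_den : ∀ a u : GaussianInt, IsUnit u → χ a u = 1

/-- `L s m = L(s, χ_m)`: the Hecke `L`-function attached to the quadratic symbol `(m/·)`,
given by its Dirichlet series over primary elements (= odd ideals) for `Re s > 1`,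
and analytic away from `s = 1`. -/
def IsHeckeL (χ : GaussianInt → GaussianInt → ℤ) (L : ℂ → GaussianInt → ℂ) : Prop :=
  (∀ (m : GaussianInt) (s : ℂ), 1 < s.re →
      L s m = ∑' n : {n : GaussianInt // IsPrimary n}, (χ m n.1 : ℂ) / (Nm n.1 : ℂ) ^ s) ∧
    ∀ m : GaussianInt, DifferentiableOn ℂ (fun s => L s m) {s : ℂ | s ≠ 1}

/-- The generalized Riemann hypothesis for the family of quadratic Hecke `L`-functions. -/
def GRHfor (L : ℂ → GaussianInt → ℂ) : Prop :=
  ∀ m : GaussianInt, m ≠ 0 → ∀ s : ℂ, 0 < s.re → s.re < 1 → L s m = 0 → s.re = 1 / 2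

/-- The absolute norm of an ideal of `ℤ[i]`, as a complex number. -/
def idN (I : Ideal GaussianInt) : ℂ := (Nat.card (GaussianInt ⧸ I) : ℂ)

/-- The Dedekind zeta function of `ℚ(i)`. -/
def IsDedekindZetaK (Z : ℂ → ℂ) : Prop :=
  (∀ s : ℂ, 1 < s.re → Z s = ∑' I : {I : Ideal GaussianInt // I ≠ ⊥}, idN I.1 ^ (-s)) ∧
    DifferentiableOn ℂ Z {s : ℂ | s ≠ 1}

/-- `ζ_K^{(2)}`: the Euler product of `ζ_K` with the factor at the prime `(1+i)` omitted. -/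
def zeta2 (Z : ℂ → ℂ) (s : ℂ) : ℂ := Z s * (1 - (2 : ℂ) ^ (-s))

/-- `P(z) = ∏_ϖ (1 + ((N(ϖ)^{z-1/2} − 1)(N(ϖ) + 1))⁻¹)`, over all primes of `ℤ[i]`. -/
def Pfun (z : ℂ) : ℂ :=
  ∏' I : {I : Ideal GaussianInt // I ≠ ⊥ ∧ I.IsPrime},
    (1 + 1 / ((idN I.1 ^ (z - 1 / 2) - 1) * (idN I.1 + 1)))

/-- The Euler product over odd primes appearing in the ratios-conjecture main term. -/
def ratioEuler (α β : ℂ) : ℂ :=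
  ∏' I : {I : Ideal GaussianInt // I ≠ ⊥ ∧ I.IsPrime ∧ (2 : GaussianInt) ∉ I},
    (1 + (idN I.1 ^ (α - β) - 1) / (idN I.1 ^ (1 + α - β) * (idN I.1 ^ (1 + α + β) - 1)))

/-- `g r n` is the quadratic Gauss sum `g(r,n) = ∑_{x mod n} (x/n) ẽ(rx/n)`:
for any complete residue system `S` modulo `n` it is given by the indicated finite sum. -/
def IsGaussSum (χ : GaussianInt → GaussianInt → ℤ) (g : GaussianInt → GaussianInt → ℂ) : Prop :=
  ∀ r n : GaussianInt, n ≠ 0 → ∀ S : Finset GaussianInt,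
    (∀ z : GaussianInt, ∃! x, x ∈ S ∧ n ∣ (z - x)) →
    g r n = ∑ x ∈ S, (χ x n : ℂ) * eT (GaussianInt.toComplex (r * x) / GaussianInt.toComplex n)

/-- A Dirichlet character modulo `q` on `ℤ[i]` (extended by zero). -/
def IsDirichletChar (q : GaussianInt) (χ : GaussianInt → ℂ) : Prop :=
  χ 1 = 1 ∧ (∀ a b : GaussianInt, χ (a * b) = χ a * χ b) ∧
    (∀ a b : GaussianInt, q ∣ (a - b) → χ a = χ b) ∧
    (∀ a : GaussianInt, IsCoprime a q → ‖χ a‖ = 1) ∧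
    (∀ a : GaussianInt, ¬ IsCoprime a q → χ a = 0)

/-- The Gauss sum `g(r,χ) = ∑_{x mod q} χ(x) ẽ(rx/q)` of a Dirichlet character modulo `q`. -/
def IsGaussSumChar (q : GaussianInt) (χ : GaussianInt → ℂ) (g : GaussianInt → ℂ) : Prop :=
  ∀ r : GaussianInt, ∀ S : Finset GaussianInt,
    (∀ z : GaussianInt, ∃! x, x ∈ S ∧ q ∣ (z - x)) →
    g r = ∑ x ∈ S, χ x * eT (GaussianInt.toComplex (r * x) / GaussianInt.toComplex q)

/-- A primary `n = a + bi` is of type 1 if `a ≡ 1, b ≡ 0 (mod 4)` (else it is of type 2). -/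
def IsTypeOne (n : GaussianInt) : Prop := n.re % 4 = 1 ∧ n.im % 4 = 0

/-- `ψ₁`, the principal character modulo `2` on `ℤ[i]`. -/
def psi1 (m : GaussianInt) : ℂ := if IsCoprime m 2 then 1 else 0

/-- `ψ₂`, the primitive quadratic character modulo `2` on `ℤ[i]`:
`ψ₂(m) = 1` for `m ≡ 1 (mod 2)`, `ψ₂(m) = −1` for `m ≡ i (mod 2)`, and `0` otherwise. -/
def psi2 (m : GaussianInt) : ℂ :=
  if (2 : GaussianInt) ∣ (m - 1) then 1 else if (2 : GaussianInt) ∣ (m - ig) then -1 else 0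

/-- `χ̃_n = ψ_j · (·/n)`, where `j` is the type of the primary element `n`. -/
def tchi (χ : GaussianInt → GaussianInt → ℤ) (n m : GaussianInt) : ℂ :=
  (if IsTypeOne n then psi1 m else psi2 m) * (χ m n : ℂ)

/-! ## Part 1: the two-dimensional theta pair -/

section ThetaPair
open HurwitzZeta Asymptotics

lemma hasSum_of_eq {ι E : Type*} [AddCommMonoid E] [TopologicalSpace E] {u v : ι → E} {A : E}
    (h : HasSum u A) (e : ∀ i, v i = u i) : HasSum v A := by
  rwa [funext e]

lemma bigO_prod_aux {u v : ℝ → ℝ} {α β : ℝ}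
    (hu : ∃ p : ℝ, 0 < p ∧ (fun x => u x - α) =O[atTop] (fun x => rexp (-p * x)))
    (hv : ∃ p : ℝ, 0 < p ∧ (fun x => v x - β) =O[atTop] (fun x => rexp (-p * x))) (r : ℝ) :
    (fun x => ((u x * v x : ℝ) : ℂ) - ((α * β : ℝ) : ℂ)) =O[atTop] (fun x : ℝ => x ^ r) := by
  obtain ⟨p, hp, hp'⟩ := hu
  obtain ⟨q, hq, hq'⟩ := hv
  have h1 := hp'.trans (isLittleO_exp_neg_mul_rpow_atTop hp r).isBigO
  have h2 := hq'.trans (isLittleO_exp_neg_mul_rpow_atTop hq r).isBigO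
  have h3 : v =O[atTop] (fun _ : ℝ => (1 : ℝ)) := by
    have h4 : (fun x => v x - β) =O[atTop] (fun _ : ℝ => (1 : ℝ)) := by
      refine hq'.trans ((isLittleO_exp_neg_mul_rpow_atTop hq 0).isBigO.trans ?_)
      simpa using isBigO_refl (fun _ : ℝ => (1 : ℝ)) atTop
    have h5 : (fun _ : ℝ => β) =O[atTop] (fun _ : ℝ => (1 : ℝ)) := isBigO_const_const _ one_ne_zero _
    simpa using h4.add h5
  have h6 : (fun x => (u x - α) * v x + α * (v x - β)) =O[atTop] (fun x : ℝ => x ^ r) := by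
    have := h1.mul h3
    simp only [mul_one] at this
    exact this.add (h2.const_mul_left α)
  have h7 : (fun x => ((u x * v x : ℝ) : ℂ) - ((α * β : ℝ) : ℂ)) =
      fun x => (((u x - α) * v x + α * (v x - β) : ℝ) : ℂ) := by
    funext x; push_cast; ring
  rw [h7]
  exact (isBigO_ofReal_left).2 h6

/-- the theta pair attached to a class `a + b i` -/
def thP (a b : UnitAddCircle) : WeakFEPair ℂ where
  f := fun x => ((evenKernel a x * evenKernel b x : ℝ) : ℂ)
  g := fun x => ((cosKernel a x * cosKernel b x : ℝ) : ℂ)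
  hf_int := (continuous_ofReal.comp_continuousOn
    ((continuousOn_evenKernel a).mul (continuousOn_evenKernel b))).locallyIntegrableOn
    measurableSet_Ioi
  hg_int := (continuous_ofReal.comp_continuousOn
    ((continuousOn_cosKernel a).mul (continuousOn_cosKernel b))).locallyIntegrableOn
    measurableSet_Ioi
  k := 1
  hk := one_pos
  ε := 1
  hε := one_ne_zero
  f₀ := (((if a = 0 then 1 else 0) * (if b = 0 then 1 else 0) : ℝ) : ℂ)
  g₀ := ((1 * 1 : ℝ) : ℂ)
  hf_top := fun r => bigO_prod_aux (isBigO_atTop_evenKernel_sub a) (isBigO_atTop_evenKernel_sub b) r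
  hg_top := fun r => bigO_prod_aux (isBigO_atTop_cosKernel_sub a) (isBigO_atTop_cosKernel_sub b) r
  h_feq := by
    intro x hx
    have hx0 : (0 : ℝ) < x := hx
    rw [evenKernel_functional_equation, evenKernel_functional_equation]
    simp only [one_div, inv_inv, one_mul, Real.rpow_one, smul_eq_mul]
    rw [← ofReal_mul]
    congr 1
    have : (x⁻¹ ^ (2⁻¹ : ℝ))⁻¹ * (x⁻¹ ^ (2⁻¹ : ℝ))⁻¹ = x := by
      rw [← mul_inv, ← Real.rpow_add (inv_pos.2 hx0)]; norm_num
    linear_combination (cosKernel a x * cosKernel b x) * this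

lemma hasSum_ind (a : ℝ) : HasSum (fun n : ℤ => if (n : ℝ) + a = 0 then (1 : ℝ) else 0)
    (if (a : UnitAddCircle) = 0 then 1 else 0) := by
  have h := (hasSum_int_evenKernel a one_pos).sub (hasSum_int_evenKernel₀ a one_pos)
  rw [sub_sub_cancel] at h
  refine hasSum_of_eq h fun n => ?_
  split_ifs with h1 <;> simp [h1]

lemma hasSum_prod_real {u v : ℤ → ℝ} {A B : ℝ} (hu : HasSum u A) (hv : HasSum v B) :
    HasSum (fun l : ℤ × ℤ => u l.1 * v l.2) (A * B) :=
  hu.mul hv (summable_mul_of_summable_norm hu.summable.norm hv.summable.norm)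

lemma hasSum_prod_cplx {u v : ℤ → ℂ} {A B : ℂ} (hu : HasSum u A) (hv : HasSum v B) :
    HasSum (fun l : ℤ × ℤ => u l.1 * v l.2) (A * B) :=
  hu.mul hv (summable_mul_of_summable_norm hu.summable.norm hv.summable.norm)

lemma thP_hasSum (a b : ℝ) {s : ℂ} (hs : 1 < s.re)
    (hsum : Summable (fun l : ℤ × ℤ => 1 / (((l.1 : ℝ) + a) ^ 2 + ((l.2 : ℝ) + b) ^ 2) ^ s.re)) :
    HasSum (fun l : ℤ × ℤ => (π : ℂ) ^ (-s) * Complex.Gamma s * 1 /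
      ((((l.1 : ℝ) + a) ^ 2 + ((l.2 : ℝ) + b) ^ 2 : ℝ) : ℂ) ^ s) ((thP a b).Λ s) := by
  rw [← ((thP a b).hasMellin (s := s) (by simpa [thP] using hs)).2]
  refine hasSum_mellin_pi_mul₀ (a := fun _ => 1)
    (p := fun l : ℤ × ℤ => ((l.1 : ℝ) + a) ^ 2 + ((l.2 : ℝ) + b) ^ 2)
    (fun l => by positivity) (by linarith) ?_ (by simpa using hsum)
  intro t ht
  have ht0 : (0 : ℝ) < t := ht
  have h1 := hasSum_prod_real (hasSum_int_evenKernel a ht0) (hasSum_int_evenKernel b ht0)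
  have h2 := hasSum_prod_real (hasSum_ind a) (hasSum_ind b)
  have h3 := hasSum_ofReal.2 (h1.sub h2)
  simp only [thP]
  rw [← ofReal_sub]
  convert h3 using 2 with l
  by_cases hl : ((l.1 : ℝ) + a) ^ 2 + ((l.2 : ℝ) + b) ^ 2 = 0
  · have e1 : (l.1 : ℝ) + a = 0 := by nlinarith [sq_nonneg ((l.1 : ℝ) + a), sq_nonneg ((l.2 : ℝ) + b)]
    have e2 : (l.2 : ℝ) + b = 0 := by nlinarith [sq_nonneg ((l.1 : ℝ) + a), sq_nonneg ((l.2 : ℝ) + b)]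
    simp [e1, e2]
  · have : ¬ ((l.1 : ℝ) + a = 0 ∧ (l.2 : ℝ) + b = 0) := by
      rintro ⟨e1, e2⟩; apply hl; rw [e1, e2]; norm_num
    have e3 : (if (l.1 : ℝ) + a = 0 then (1 : ℝ) else 0) * (if (l.2 : ℝ) + b = 0 then (1 : ℝ) else 0) = 0 := by
      split_ifs <;> simp_all
    rw [e3, if_neg hl, sub_zero, one_mul, ← Real.exp_add]
    congr 2; ring

lemma thP_symm_hasSum (a b : ℝ) {s : ℂ} (hs : 1 < s.re)
    (hsum : Summable (fun l : ℤ × ℤ => 1 / (((l.1 : ℝ)) ^ 2 + ((l.2 : ℝ)) ^ 2) ^ s.re)) :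
    HasSum (fun l : ℤ × ℤ => (π : ℂ) ^ (-s) * Complex.Gamma s *
      (cexp (2 * π * I * a * l.1) * cexp (2 * π * I * b * l.2)) /
      ((((l.1 : ℝ)) ^ 2 + ((l.2 : ℝ)) ^ 2 : ℝ) : ℂ) ^ s) ((thP a b).symm.Λ s) := by
  rw [← ((thP a b).symm.hasMellin (s := s) (by simpa [thP] using hs)).2]
  have hnorm : ∀ (c : ℝ) (m : ℤ), ‖cexp (2 * π * I * c * m)‖ = 1 := by
    intro c m
    have : (2 * π * I * c * m : ℂ) = ((2 * π * c * m : ℝ) : ℂ) * I := by push_cast; ring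
    rw [this, Complex.norm_exp_ofReal_mul_I]
  refine hasSum_mellin_pi_mul₀
    (a := fun l : ℤ × ℤ => cexp (2 * π * I * a * l.1) * cexp (2 * π * I * b * l.2))
    (p := fun l : ℤ × ℤ => ((l.1 : ℝ)) ^ 2 + ((l.2 : ℝ)) ^ 2)
    (fun l => by positivity) (by linarith) ?_ ?_
  · intro t ht
    have ht0 : (0 : ℝ) < t := ht
    have h1 := hasSum_prod_cplx (hasSum_int_cosKernel a ht0) (hasSum_int_cosKernel b ht0)
    have h2 := hasSum_ite_sub_hasSum h1 (0, 0)
    simp only [WeakFEPair.symm, thP]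
    have e0 : ((cosKernel a t * cosKernel b t : ℝ) : ℂ) - ((1 * 1 : ℝ) : ℂ) =
        ↑(cosKernel (↑a) t) * ↑(cosKernel (↑b) t) -
      cexp (2 * ↑π * I * ↑a * ((0, 0) : ℤ × ℤ).1) * ↑(rexp (-π * ((0, 0) : ℤ × ℤ).1 ^ 2 * t)) *
        (cexp (2 * ↑π * I * ↑b * ((0, 0) : ℤ × ℤ).2) * ↑(rexp (-π * ((0, 0) : ℤ × ℤ).2 ^ 2 * t))) := by
      simp
    rw [e0]
    refine hasSum_of_eq h2 fun l => ?_
    · by_cases hl : ((l.1 : ℝ)) ^ 2 + ((l.2 : ℝ)) ^ 2 = 0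
      · have e1 : (l.1 : ℝ) = 0 := by nlinarith [sq_nonneg ((l.1 : ℝ)), sq_nonneg ((l.2 : ℝ))]
        have e2 : (l.2 : ℝ) = 0 := by nlinarith [sq_nonneg ((l.1 : ℝ)), sq_nonneg ((l.2 : ℝ))]
        have : l = (0, 0) := Prod.ext (by exact_mod_cast e1) (by exact_mod_cast e2)
        rw [if_pos hl, if_pos this]
      · have : ¬ l = (0, 0) := by
          rintro rfl; apply hl; simp
        rw [if_neg hl, if_neg this]
        have : rexp (-π * ((l.1 : ℝ) ^ 2 + (l.2 : ℝ) ^ 2) * t) =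
            rexp (-π * (l.1 : ℝ) ^ 2 * t) * rexp (-π * (l.2 : ℝ) ^ 2 * t) := by
          rw [← Real.exp_add]; congr 1; ring
        rw [this]; push_cast; ring
  · simpa [hnorm] using hsum

end ThetaPair

/-! ## Part 2: lattice sums -/

section Lattice

lemma Nm_eq (m : GaussianInt) : Nm m = (m.re : ℝ) ^ 2 + (m.im : ℝ) ^ 2 := by
  simp [Nm, Zsqrtd.norm_def]; ring

lemma Nm_nonneg (m : GaussianInt) : 0 ≤ Nm m := by rw [Nm_eq]; positivity

lemma Nm_eq_normSq (m : GaussianInt) : Nm m = Complex.normSq (GaussianInt.toComplex m) := by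
  rw [Nm_eq, Complex.normSq_apply]; simp; ring

lemma Nm_pos {m : GaussianInt} (h : m ≠ 0) : 0 < Nm m := by
  rw [Nm_eq_normSq, Complex.normSq_pos]
  simpa using h

lemma Nm_zero : Nm 0 = 0 := by simp [Nm]

/-- coordinates -/
def eG : ℤ × ℤ ≃ GaussianInt where
  toFun l := ⟨l.1, l.2⟩
  invFun m := (m.re, m.im)
  left_inv _ := rfl
  right_inv _ := rfl

/-- swapped coordinates -/
def eG' : ℤ × ℤ ≃ GaussianInt where
  toFun l := ⟨l.2, l.1⟩
  invFun m := (m.im, m.re)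
  left_inv _ := rfl
  right_inv _ := rfl

lemma summable_Nm {σ : ℝ} (hσ : 1 < σ) : Summable (fun m : GaussianInt => 1 / (Nm m) ^ σ) := by
  have h := EisensteinSeries.summable_one_div_norm_rpow (k := 2 * σ) (by linarith)
  rw [← (finTwoArrowEquiv ℤ).symm.summable_iff] at h
  rw [← eG.summable_iff]
  refine Summable.of_nonneg_of_le (fun l => ?_) (fun l => ?_) h
  · have := Nm_nonneg (eG l)
    simp only [Function.comp]; positivity
  · simp only [Function.comp]
    set x := (finTwoArrowEquiv ℤ).symm l with hx
    by_cases h0 : x = 0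
    · have h1 : x 0 = 0 := by rw [h0]; rfl
      have h2 : x 1 = 0 := by rw [h0]; rfl
      simp [hx] at h1 h2
      have : eG l = 0 := by
        simp [eG, h1, h2]; rfl
      rw [this, Nm_zero, Real.zero_rpow (by linarith)]
      simp only [div_zero]; positivity
    · have hpos : 0 < ‖x‖ := norm_pos_iff.2 h0
      have hle : ‖x‖ ^ 2 ≤ Nm (eG l) := by
        rw [Nm_eq]
        have : ‖x‖ ≤ Real.sqrt (((eG l).re : ℝ) ^ 2 + ((eG l).im : ℝ) ^ 2) := by
          rw [pi_norm_le_iff_of_nonneg (Real.sqrt_nonneg _)]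
          intro i
          apply Real.le_sqrt_of_sq_le
          rw [Int.norm_eq_abs, sq_abs]
          fin_cases i
          · simp [hx, eG]; positivity
          · simp [hx, eG]; positivity
        calc ‖x‖ ^ 2 ≤ Real.sqrt (((eG l).re : ℝ) ^ 2 + ((eG l).im : ℝ) ^ 2) ^ 2 := by gcongr
          _ = _ := Real.sq_sqrt (by positivity)
      rw [Real.rpow_neg hpos.le, ← one_div, Real.rpow_mul hpos.le, Real.rpow_two]
      apply one_div_le_one_div_of_le (by positivity)
      gcongr

variable (q : GaussianInt)

/-- residue classes -/
abbrev Rq := GaussianInt ⧸ (Ideal.span {q} : Ideal GaussianInt)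

/-- representative of a class -/
def rp (r : Rq q) : GaussianInt := Quotient.out r

lemma rp_mk (r : Rq q) : (Ideal.Quotient.mk _ (rp q r) : Rq q) = r := Quotient.out_eq' r

/-- the point `x/q` -/
def zq (x : GaussianInt) : ℂ := GaussianInt.toComplex x / GaussianInt.toComplex q

variable {q}

lemma mk_eq_iff (a b : GaussianInt) :
    (Ideal.Quotient.mk (Ideal.span {q}) a = Ideal.Quotient.mk _ b) ↔ q ∣ a - b := by
  rw [Ideal.Quotient.eq, Ideal.mem_span_singleton]

lemma finite_Rq (hq : q ≠ 0) : Finite (Rq q) := by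
  have hne : Ideal.span {q} ≠ (⊥ : Ideal GaussianInt) := by simpa using hq
  let b : Module.Basis (Fin 2) ℤ GaussianInt :=
    Module.Basis.ofEquivFun
      { toFun := fun m => ![m.re, m.im]
        map_add' := fun x y => by ext i; fin_cases i <;> simp
        map_smul' := fun c x => by ext i; fin_cases i <;> simp
        invFun := fun v => ⟨v 0, v 1⟩
        left_inv := fun m => by simp
        right_inv := fun v => by ext i; fin_cases i <;> simp }
  have : Module.Finite ℤ GaussianInt := Module.Finite.of_basis b
  have : Module.Free ℤ GaussianInt := Module.Free.of_basis b
  exact Ideal.finiteQuotientOfFreeOfNeBot _ hne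

/-- decomposition into residue classes -/
def eR (hq : q ≠ 0) : Rq q × GaussianInt ≃ GaussianInt := by
  refine Equiv.ofBijective (fun p => rp q p.1 + q * p.2) ⟨?_, ?_⟩
  · rintro ⟨r, l⟩ ⟨r', l'⟩ h
    simp only at h
    have h1 : r = r' := by
      rw [← rp_mk q r, ← rp_mk q r', mk_eq_iff]
      exact ⟨l' - l, by linear_combination h⟩
    subst h1
    have : l = l' := mul_left_cancel₀ hq (add_left_cancel h)
    rw [this]
  · intro m
    have h : q ∣ m - rp q (Ideal.Quotient.mk _ m) := by
      rw [← mk_eq_iff, rp_mk]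
    obtain ⟨l, hl⟩ := h
    exact ⟨(Ideal.Quotient.mk _ m, l), by simp only; linear_combination -hl⟩

lemma eR_apply (hq : q ≠ 0) (p : Rq q × GaussianInt) : eR hq p = rp q p.1 + q * p.2 := rfl

lemma Nm_shift (hq : q ≠ 0) (x l : GaussianInt) :
    Nm (x + q * l) = Nm q * (((l.re : ℝ) + (zq q x).re) ^ 2 + ((l.im : ℝ) + (zq q x).im) ^ 2) := by
  have hq' : GaussianInt.toComplex q ≠ 0 := by simpa using hq
  have h : GaussianInt.toComplex (x + q * l) =
      GaussianInt.toComplex q * (GaussianInt.toComplex l + zq q x) := by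
    rw [map_add, map_mul, zq]; field_simp; ring
  rw [Nm_eq_normSq, h, Complex.normSq_mul, ← Nm_eq_normSq]
  congr 1
  rw [Complex.normSq_apply]; simp; ring

lemma class_hasSum (hq : q ≠ 0) (x : GaussianInt) {s : ℂ} (hs : 1 < s.re) :
    HasSum (fun l : GaussianInt => (π : ℂ) ^ (-s) * Complex.Gamma s / (Nm (x + q * l) : ℂ) ^ s)
      ((Nm q : ℂ) ^ (-s) * (thP (zq q x).re (zq q x).im).Λ s) := by
  have hQ := Nm_pos hq
  have hinj : Function.Injective (fun l : GaussianInt => x + q * l) := fun l l' h =>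
    mul_left_cancel₀ hq (add_left_cancel h)
  have h1 := ((summable_Nm hs).comp_injective hinj).mul_left ((Nm q) ^ s.re)
  rw [← eG.summable_iff] at h1
  have h2 := thP_hasSum (zq q x).re (zq q x).im hs (h1.congr fun l => by
    simp only [Function.comp, Nm_shift hq]
    rw [Real.mul_rpow hQ.le (by positivity)]
    simp only [eG, Equiv.coe_fn_mk]
    have := (Real.rpow_pos_of_pos hQ s.re).ne'
    field_simp)
  rw [← eG.hasSum_iff]
  refine hasSum_of_eq (h2.mul_left _) fun l => ?_
  simp only [Function.comp, Nm_shift hq]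
  rw [ofReal_mul, Complex.mul_cpow_ofReal_nonneg hQ.le (by positivity), Complex.cpow_neg (Nm q : ℂ) s]
  simp only [eG, Equiv.coe_fn_mk]
  simp only [div_eq_mul_inv, mul_inv]
  ring

lemma norm_Nm_cpow (m : GaussianInt) {s : ℂ} (hs : 1 < s.re) :
    ‖(Nm m : ℂ) ^ s‖ = (Nm m) ^ s.re := by
  rw [Complex.norm_cpow_eq_rpow_re_of_nonneg (Nm_nonneg m)]
  linarith

lemma summable_phi {φ : GaussianInt → ℂ} (C : ℝ) (hb : ∀ m, ‖φ m‖ ≤ C) {s : ℂ} (hs : 1 < s.re) :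
    Summable (fun m => φ m / (Nm m : ℂ) ^ s) := by
  refine Summable.of_norm_bounded ((summable_Nm hs).mul_left C) fun m => ?_
  rw [norm_div, norm_Nm_cpow m hs, div_eq_mul_one_div]
  have := Nm_nonneg m
  gcongr
  exact hb m

lemma zeta_class (hq : q ≠ 0) [Fintype (Rq q)] {φ : GaussianInt → ℂ} (C : ℝ) (hb : ∀ m, ‖φ m‖ ≤ C)
    (hper : ∀ a b, q ∣ a - b → φ a = φ b) {s : ℂ} (hs : 1 < s.re) :
    (π : ℂ) ^ (-s) * Complex.Gamma s * ∑' m, φ m / (Nm m : ℂ) ^ s =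
      (Nm q : ℂ) ^ (-s) * ∑ r : Rq q, φ (rp q r) *
        (thP (zq q (rp q r)).re (zq q (rp q r)).im).Λ s := by
  have h1 := summable_phi C hb hs
  rw [← (eR hq).summable_iff] at h1
  rw [← (eR hq).tsum_eq (fun m => φ m / (Nm m : ℂ) ^ s)]
  rw [show (∑' c, φ (eR hq c) / (Nm (eR hq c) : ℂ) ^ s) = ∑' c, ((fun m => φ m / (Nm m : ℂ) ^ s) ∘ eR hq) c from rfl,
    h1.tsum_prod, tsum_fintype,
    Finset.mul_sum, Finset.mul_sum]
  refine Finset.sum_congr rfl fun r _ => ?_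
  have h2 := (class_hasSum hq (rp q r) hs).tsum_eq
  rw [← mul_left_comm, ← h2, ← tsum_mul_left, ← tsum_mul_left]
  refine tsum_congr fun l => ?_
  simp only [Function.comp]
  rw [eR_apply, hper (rp q r + q * l) (rp q r) ⟨l, by ring⟩]
  ring

lemma eT_eq (z : ℂ) : eT z = cexp (2 * π * I * z.im) := by
  rw [eT]
  congr 2
  have := Complex.sub_conj z
  rw [← sub_div, this]
  have := Complex.I_ne_zero
  push_cast
  field_simp

lemma gauss_class [Fintype (Rq q)] {φ : GaussianInt → ℂ} {s : ℂ} (hs : 1 < s.re) :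
    (π : ℂ) ^ (-s) * Complex.Gamma s * ∑' k : GaussianInt,
      (∑ r : Rq q, φ (rp q r) * eT (GaussianInt.toComplex (k * rp q r) / GaussianInt.toComplex q))
        / (Nm k : ℂ) ^ s =
      ∑ r : Rq q, φ (rp q r) * (thP (zq q (rp q r)).re (zq q (rp q r)).im).symm.Λ s := by
  have h0 := summable_Nm hs
  rw [← eG'.summable_iff] at h0
  have h1 : ∀ r : Rq q, HasSum (fun k : GaussianInt => (π : ℂ) ^ (-s) * Complex.Gamma s *
      (φ (rp q r) * eT (GaussianInt.toComplex (k * rp q r) / GaussianInt.toComplex q)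
        / (Nm k : ℂ) ^ s)) (φ (rp q r) * (thP (zq q (rp q r)).re (zq q (rp q r)).im).symm.Λ s) := by
    intro r
    have h2 := thP_symm_hasSum (zq q (rp q r)).re (zq q (rp q r)).im hs (h0.congr fun l => by
      simp only [Function.comp, Nm_eq, eG', Equiv.coe_fn_mk]
      rw [add_comm])
    rw [← eG'.hasSum_iff]
    refine hasSum_of_eq (h2.mul_left (φ (rp q r))) fun l => ?_
    simp only [Function.comp, Nm_eq, eT_eq]
    have h3 : GaussianInt.toComplex (eG' l * rp q r) / GaussianInt.toComplex q =
        GaussianInt.toComplex (eG' l) * zq q (rp q r) := by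
      rw [map_mul, zq, mul_div_assoc]
    rw [h3, ← Complex.exp_add]
    have h4 : (2 * π * I * ((GaussianInt.toComplex (eG' l) * zq q (rp q r)).im : ℝ) : ℂ) =
        2 * π * I * (zq q (rp q r)).re * l.1 + 2 * π * I * (zq q (rp q r)).im * l.2 := by
      rw [Complex.mul_im]; simp [eG']; ring
    rw [h4]
    simp only [eG', Equiv.coe_fn_mk]
    rw [add_comm ((l.2 : ℝ) ^ 2)]
    ring
  have h5 := (hasSum_sum (s := Finset.univ) fun r _ => h1 r).tsum_eq
  rw [← h5, ← tsum_mul_left]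
  refine tsum_congr fun k => ?_
  rw [Finset.sum_div, Finset.mul_sum]

end Lattice

/-! ## Part 3: the functional equation for periodic functions -/

section FE

lemma general_fe {q : GaussianInt} (hq : q ≠ 0) [Fintype (Rq q)] {φ : GaussianInt → ℂ} (C : ℝ)
    (hb : ∀ m, ‖φ m‖ ≤ C) (hper : ∀ a b, q ∣ a - b → φ a = φ b) (L : ℂ → ℂ)
    (hL : Differentiable ℂ L)
    (hser : ∀ s : ℂ, 1 < s.re → ∑' m, φ m / (Nm m : ℂ) ^ s = 4 * L s)
    (g : GaussianInt → ℂ)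
    (hg : ∀ k, g k = ∑ r : Rq q, φ (rp q r) *
      eT (GaussianInt.toComplex (k * rp q r) / GaussianInt.toComplex q))
    (s : ℂ) (hs : s.re < 0) :
    L s = (Nm q : ℂ) ^ (-s) * (Real.pi : ℂ) ^ (-(1 - 2 * s)) *
          (Complex.Gamma (1 - s) / (4 * Complex.Gamma s)) *
          ∑' k : GaussianInt, g k / (Nm k : ℂ) ^ (1 - s) := by
  have hpi : (π : ℂ) ≠ 0 := by exact_mod_cast Real.pi_ne_zero
  have hQ : (Nm q : ℂ) ≠ 0 := by exact_mod_cast (Nm_pos hq).ne'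
  set P : Rq q → WeakFEPair ℂ := fun r => thP (zq q (rp q r)).re (zq q (rp q r)).im with hP
  set T : ℂ → ℂ := fun s => ∑ r : Rq q, φ (rp q r) * (P r).Λ s with hT
  set B : ℂ → ℂ := fun s => (π : ℂ) ^ s * (Complex.Gamma s)⁻¹ * ((Nm q : ℂ) ^ (-s) * T s) with hB
  set U : Set ℂ := ({0, 1} : Set ℂ)ᶜ with hU
  have hUo : IsOpen U := (Set.toFinite _).isClosed.isOpen_compl
  have hUc : IsPreconnected U := by
    have h : (({0, 1} : Set ℂ)).Countable := (Set.toFinite _).countable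
    exact (h.isConnected_compl_of_one_lt_rank (by
      rw [Complex.rank_real_complex]; norm_num)).isPreconnected
  have hBd : DifferentiableOn ℂ B U := by
    intro z hz
    have hz0 : z ≠ 0 := fun h => hz (by simp [h])
    have hz1 : z ≠ 1 := fun h => hz (by simp [h])
    apply DifferentiableAt.differentiableWithinAt
    have hTd : DifferentiableAt ℂ T z := by
      apply DifferentiableAt.fun_sum
      intro r _
      exact ((P r).differentiableAt_Λ (Or.inl hz0) (Or.inl (by simpa [hP, thP] using hz1))).const_mul _
    refine DifferentiableAt.mul (DifferentiableAt.mul ?_ (Complex.differentiable_one_div_Gamma z))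
      (DifferentiableAt.mul ?_ hTd)
    · exact differentiableAt_id.const_cpow (Or.inl hpi)
    · exact differentiableAt_id.neg.const_cpow (Or.inl hQ)
  have hAd : DifferentiableOn ℂ (fun s => 4 * L s) U := (hL.const_mul 4).differentiableOn
  have hev : (fun s => 4 * L s) =ᶠ[𝓝 (2 : ℂ)] B := by
    have : {s : ℂ | 1 < s.re} ∈ 𝓝 (2 : ℂ) :=
      (isOpen_lt continuous_const Complex.continuous_re).mem_nhds (by simp)
    filter_upwards [this] with z hz
    have hz' : 1 < z.re := hz
    have h1 := zeta_class hq C hb hper hz'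
    rw [hser z hz'] at h1
    have hG : Complex.Gamma z ≠ 0 := Complex.Gamma_ne_zero_of_re_pos (by linarith)
    have hpz : (π : ℂ) ^ z * (π : ℂ) ^ (-z) = 1 := by
      rw [← Complex.cpow_add _ _ hpi]; simp
    have h2 : (Complex.Gamma z)⁻¹ * Complex.Gamma z = 1 := inv_mul_cancel₀ hG
    simp only [hB, hT, hP]
    rw [← h1]
    linear_combination (-4 * L z * ((Complex.Gamma z)⁻¹ * Complex.Gamma z)) * hpz - 4 * L z * h2
  have heq := (hAd.analyticOnNhd hUo).eqOn_of_preconnected_of_eventuallyEq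
    (hBd.analyticOnNhd hUo) hUc (z₀ := 2) (by simp [hU]) hev
  have hsU : s ∈ U := by
    intro h
    rcases h with h | h
    · rw [h] at hs; simp at hs
    · rw [Set.mem_singleton_iff.1 h] at hs; simp at hs; linarith
  have h1 : 4 * L s = B s := heq hsU
  have h2 : T s = (π : ℂ) ^ (-(1 - s)) * Complex.Gamma (1 - s) *
      ∑' k : GaussianInt, g k / (Nm k : ℂ) ^ (1 - s) := by
    have h3 := gauss_class (q := q) (φ := φ) (s := 1 - s) (by simp; linarith)
    simp only [← hg] at h3
    rw [h3]
    refine Finset.sum_congr rfl fun r _ => ?_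
    have h4 := (P r).functional_equation (1 - s)
    have h5 : (((P r).k : ℝ) : ℂ) = 1 := by simp [hP, thP]
    have h6 : (P r).ε = 1 := by simp [hP, thP]
    rw [h5, h6, sub_sub_cancel, one_smul] at h4
    rw [h4]
  have h7 : (π : ℂ) ^ (-(1 - 2 * s)) = (π : ℂ) ^ s * (π : ℂ) ^ (-(1 - s)) := by
    rw [← Complex.cpow_add _ _ hpi]; congr 1; ring
  have h8 : L s = B s / 4 := by rw [← h1]; ring
  rw [h8, h7]
  simp only [hB]
  rw [h2]
  rw [div_eq_mul_inv (Complex.Gamma (1 - s)), mul_inv]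
  ring

end FE

/-! ## Part 4: arithmetic of the quadratic symbol -/

section Arith

lemma omega_dvd_iff (m : GaussianInt) : ωg ∣ m ↔ (m.re + m.im) % 2 = 0 := by
  constructor
  · rintro ⟨c, rfl⟩
    simp [ωg]; ring_nf; omega
  · intro h
    refine ⟨⟨(m.re + m.im) / 2, (m.im - m.re) / 2⟩, ?_⟩
    apply Zsqrtd.ext
    · simp [ωg]; omega
    · simp [ωg]; omega

lemma two_dvd_iff (m : GaussianInt) : (2 : GaussianInt) ∣ m ↔ m.re % 2 = 0 ∧ m.im % 2 = 0 := by
  have h := Zsqrtd.intCast_dvd (d := -1) 2 m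
  rw [show ((2 : ℤ) : GaussianInt) = 2 by norm_num] at h
  rw [h]; omega

lemma primary_iff (m : GaussianInt) : IsPrimary m ↔ m.im % 2 = 0 ∧ (m.re + m.im) % 4 = 1 := by
  have e : ωg ^ 3 = (⟨-2, 2⟩ : GaussianInt) := by
    rw [pow_three]; rfl
  rw [IsPrimary, e]
  constructor
  · rintro ⟨c, hc⟩
    have h1 := congrArg Zsqrtd.re hc
    have h2 := congrArg Zsqrtd.im hc
    simp at h1 h2
    omega
  · rintro ⟨h1, h2⟩
    refine ⟨⟨(m.im - m.re + 1) / 4, (1 - m.re - m.im) / 4⟩, ?_⟩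
    apply Zsqrtd.ext
    · simp; omega
    · simp; omega

lemma norm_mod4 (m : GaussianInt) (h : ¬ ωg ∣ m) : m.norm % 8 = 1 ∨ m.norm % 8 = 5 := by
  rw [omega_dvd_iff] at h
  rw [Zsqrtd.norm_def]
  have h3 : (m.re * m.re - -1 * m.im * m.im) % 8 =
      ((m.re % 8) * (m.re % 8) + (m.im % 8) * (m.im % 8)) % 8 := by
    rw [show m.re * m.re - -1 * m.im * m.im = m.re * m.re + m.im * m.im by ring]
    simp [Int.add_emod, Int.mul_emod]
  rw [h3]
  have h4 : 0 ≤ m.re % 8 := by omega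
  have h5 : m.re % 8 < 8 := by omega
  have h6 : 0 ≤ m.im % 8 := by omega
  have h7 : m.im % 8 < 8 := by omega
  have h8 : (m.re % 8 + m.im % 8) % 2 ≠ 0 := by omega
  generalize m.re % 8 = x at *
  generalize m.im % 8 = y at *
  interval_cases x <;> interval_cases y <;> omega

/-- the value of the symbol at `i` -/
def sg (m : GaussianInt) : ℤ := if m.norm % 8 = 1 then 1 else -1

lemma sg_mul (m k : GaussianInt) (hm : ¬ ωg ∣ m) (hk : ¬ ωg ∣ k) : sg (m * k) = sg m * sg k := by
  have e : (m * k).norm % 8 = ((m.norm % 8) * (k.norm % 8)) % 8 := by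
    rw [Zsqrtd.norm_mul, Int.mul_emod]
  simp only [sg, e]
  rcases norm_mod4 m hm with h1 | h1 <;> rcases norm_mod4 k hk with h2 | h2 <;> simp [h1, h2]

lemma ig_sq : ig ^ 2 = (-1 : GaussianInt) := by rw [pow_two]; rfl

lemma sg_pow (m : GaussianInt) (hm : ¬ ωg ∣ m) :
    ig ^ ((m.norm.toNat - 1) / 2) = (sg m : GaussianInt) := by
  have h0 : 0 ≤ m.norm := GaussianInt.norm_nonneg m
  obtain ⟨N, hN⟩ := Int.eq_ofNat_of_zero_le h0
  rcases norm_mod4 m hm with h1 | h1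
  · have h2 : (m.norm.toNat - 1) / 2 = 2 * (2 * (N / 8)) := by omega
    rw [h2, pow_mul, ig_sq, pow_mul]; simp [sg, h1]
  · have h2 : (m.norm.toNat - 1) / 2 = 2 * (2 * (N / 8) + 1) := by omega
    rw [h2, pow_mul, ig_sq, pow_succ, pow_mul]; simp [sg, h1]

lemma sg_pm (m : GaussianInt) : sg m = 1 ∨ sg m = -1 := by
  unfold sg; split_ifs <;> simp

lemma pm_eq {p : GaussianInt} (hp : Prime p) (ho : ¬ ωg ∣ p) {x y : ℤ} (hx : x = 1 ∨ x = -1)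
    (hy : y = 1 ∨ y = -1) (h : p ∣ (x : GaussianInt) - (y : GaussianInt)) : x = y := by
  by_contra hne
  have h2 : p ∣ 2 := by
    rcases hx with rfl | rfl <;> rcases hy with rfl | rfl
    · exact absurd rfl hne
    · have : ((1 : ℤ) : GaussianInt) - ((-1 : ℤ) : GaussianInt) = 2 := by norm_num
      rwa [this] at h
    · have : ((-1 : ℤ) : GaussianInt) - ((1 : ℤ) : GaussianInt) = -2 := by norm_num
      rw [this] at h
      exact (dvd_neg).1 h
    · exact absurd rfl hne
  obtain ⟨c, hc⟩ := h2
  have h3 : (4 : ℤ) = p.norm * c.norm := by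
    rw [← Zsqrtd.norm_mul, ← hc]; rfl
  have h4 : p.norm ∣ 4 := ⟨_, h3⟩
  have h5 := norm_mod4 p ho
  have h6 : 0 ≤ p.norm := GaussianInt.norm_nonneg p
  have h7 : p.norm ≤ 4 := Int.le_of_dvd (by norm_num) h4
  have h8 : p.norm = 1 := by omega
  exact hp.not_isUnit ((Zsqrtd.norm_eq_one_iff' (by norm_num) p).1 h8)

lemma odd_of_mul {a b : GaussianInt} (h : ¬ ωg ∣ a * b) : ¬ ωg ∣ a ∧ ¬ ωg ∣ b :=
  ⟨fun h1 => h (h1.mul_right _), fun h1 => h (h1.mul_left _)⟩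

lemma quad_props {χ : GaussianInt → GaussianInt → ℤ} (hχ : IsQuadSym χ) (n : GaussianInt) :
    ¬ ωg ∣ n → (∀ a b, n ∣ a - b → χ a n = χ b n) ∧ (∀ a, |χ a n| ≤ 1) ∧
      (∀ a, χ (ig * a) n = sg n * χ a n) := by
  induction n using UniqueFactorizationMonoid.induction_on_prime with
  | h₁ => intro h; exact absurd (dvd_zero _) h
  | h₂ u hu =>
    intro _
    refine ⟨fun a b _ => ?_, fun a => ?_, fun a => ?_⟩
    · rw [hχ.unit_den a u hu, hχ.unit_den b u hu]
    · rw [hχ.unit_den a u hu]; simp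
    · rw [hχ.unit_den _ u hu, hχ.unit_den _ u hu]
      have := (Zsqrtd.norm_eq_one_iff' (by norm_num) u).2 hu
      simp [sg, this]
  | h₃ m p hm hp ih =>
    intro ho
    obtain ⟨hop, hom⟩ := odd_of_mul ho
    obtain ⟨i1, i2, i3⟩ := ih hom
    have e : ∀ a, χ a (p * m) = χ a p * χ a m := fun a => hχ.mul_den a p m hop hom
    refine ⟨fun a b hab => ?_, fun a => ?_, fun a => ?_⟩
    · rw [e, e, i1 a b ((dvd_mul_left _ _).trans hab)]
      congr 1
      have hpab : p ∣ a - b := (dvd_mul_right _ _).trans hab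
      by_cases ha : p ∣ a
      · have hb : p ∣ b := (dvd_sub_right ha).1 hpab
        rw [hχ.zero_of_dvd p a hp ha, hχ.zero_of_dvd p b hp hb]
      · have hb : ¬ p ∣ b := fun hb => ha ((dvd_sub_left hb).1 hpab)
        obtain ⟨ha1, ha2⟩ := hχ.val_prime p a hp hop ha
        obtain ⟨hb1, hb2⟩ := hχ.val_prime p b hp hop hb
        apply pm_eq hp hop ha1 hb1
        have h1 := hpab.trans (sub_dvd_pow_sub_pow a b (((Zsqrtd.norm p).toNat - 1) / 2))
        have h2 := (dvd_sub (dvd_add h1 hb2) ha2)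
        convert h2 using 1
        ring
    · rw [e, abs_mul]
      have : |χ a p| ≤ 1 := by
        by_cases ha : p ∣ a
        · rw [hχ.zero_of_dvd p a hp ha]; simp
        · rcases (hχ.val_prime p a hp hop ha).1 with h | h <;> simp [h]
      exact mul_le_one₀ this (abs_nonneg _) (i2 a)
    · rw [e, e, i3, sg_mul p m hop hom]
      have : χ (ig * a) p = sg p * χ a p := by
        by_cases ha : p ∣ a
        · rw [hχ.zero_of_dvd p a hp ha, hχ.zero_of_dvd p _ hp (ha.mul_left _), mul_zero]
        · have hu : IsUnit ig := by
            refine IsUnit.of_mul_eq_one (-ig) ?_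
            linear_combination -ig_sq
          have hia : ¬ p ∣ ig * a := fun h => ha ((hu.dvd_mul_left).1 h)
          obtain ⟨ha1, ha2⟩ := hχ.val_prime p a hp hop ha
          obtain ⟨hb1, hb2⟩ := hχ.val_prime p _ hp hop hia
          apply pm_eq hp hop hb1
          · rcases sg_pm p with h | h <;> rcases ha1 with h' | h' <;> simp [h, h']
          · rw [mul_pow, sg_pow p hop] at hb2
            have := dvd_sub (ha2.mul_left (sg p : GaussianInt)) hb2
            convert this using 1
            push_cast; ring
      rw [this]; ring

lemma psi1_ig (m : GaussianInt) : psi1 (ig * m) = psi1 m := by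
  have hu : IsUnit ig := by
    refine IsUnit.of_mul_eq_one (-ig) ?_
    linear_combination -ig_sq
  unfold psi1
  rw [isCoprime_mul_unit_left_left hu]

lemma psi2_eq (m : GaussianInt) : psi2 m =
    if m.re % 2 = 1 ∧ m.im % 2 = 0 then 1 else if m.re % 2 = 0 ∧ m.im % 2 = 1 then -1 else 0 := by
  unfold psi2
  have h1 : (2 : GaussianInt) ∣ m - 1 ↔ m.re % 2 = 1 ∧ m.im % 2 = 0 := by
    rw [two_dvd_iff]; simp; omega
  have h2 : (2 : GaussianInt) ∣ m - ig ↔ m.re % 2 = 0 ∧ m.im % 2 = 1 := by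
    rw [two_dvd_iff]; simp [ig]; omega
  simp only [h1, h2]

lemma psi2_ig (m : GaussianInt) : psi2 (ig * m) = - psi2 m := by
  rw [psi2_eq, psi2_eq]
  have h1 : (ig * m).re = - m.im := by simp [ig]
  have h2 : (ig * m).im = m.re := by simp [ig]
  rw [h1, h2]
  split_ifs <;> first | omega | simp

lemma psi1_even (m : GaussianInt) (h : ωg ∣ m) : psi1 m = 0 := by
  unfold psi1
  rw [if_neg]
  intro hc
  have h2 : ωg ∣ 2 := by rw [omega_dvd_iff]; rfl
  have := hc.isUnit_of_dvd' h h2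
  have := (Zsqrtd.norm_eq_one_iff' (by norm_num) ωg).2 this
  revert this; decide

lemma psi2_even (m : GaussianInt) (h : ωg ∣ m) : psi2 m = 0 := by
  rw [omega_dvd_iff] at h
  rw [psi2_eq, if_neg (by omega), if_neg (by omega)]

lemma psi1_per (a b : GaussianInt) (h : (2 : GaussianInt) ∣ a - b) : psi1 a = psi1 b := by
  obtain ⟨c, hc⟩ := h
  have : a = b + 2 * c := by linear_combination hc
  unfold psi1
  rw [this, IsCoprime.add_mul_left_left_iff]

lemma psi2_per (a b : GaussianInt) (h : (2 : GaussianInt) ∣ a - b) : psi2 a = psi2 b := by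
  rw [two_dvd_iff] at h
  simp at h
  have h1 : a.re % 2 = b.re % 2 := by omega
  have h2 : a.im % 2 = b.im % 2 := by omega
  rw [psi2_eq, psi2_eq, h1, h2]

lemma psi1_norm (m : GaussianInt) : ‖psi1 m‖ ≤ 1 := by
  unfold psi1; split_ifs <;> simp

lemma psi2_norm (m : GaussianInt) : ‖psi2 m‖ ≤ 1 := by
  unfold psi2; split_ifs <;> simp

lemma primary_odd {n : GaussianInt} (hn : IsPrimary n) : ¬ ωg ∣ n := by
  rw [primary_iff] at hn; rw [omega_dvd_iff]; omega

lemma sg_typeOne {n : GaussianInt} (hn : IsPrimary n) : sg n = if IsTypeOne n then 1 else -1 := by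
  rw [primary_iff] at hn
  have key : n.norm % 8 = 1 ↔ IsTypeOne n := by
    unfold IsTypeOne
    rw [Zsqrtd.norm_def]
    have h3 : (n.re * n.re - -1 * n.im * n.im) % 8 =
        ((n.re % 8) * (n.re % 8) + (n.im % 8) * (n.im % 8)) % 8 := by
      rw [show n.re * n.re - -1 * n.im * n.im = n.re * n.re + n.im * n.im by ring]
      simp [Int.add_emod, Int.mul_emod]
    rw [h3]
    have h4 : 0 ≤ n.re % 8 := by omega
    have h5 : n.re % 8 < 8 := by omega
    have h6 : 0 ≤ n.im % 8 := by omega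
    have h7 : n.im % 8 < 8 := by omega
    have h8 : n.re % 4 = (n.re % 8) % 4 := by omega
    have h9 : n.im % 4 = (n.im % 8) % 4 := by omega
    have h10 : (n.im % 8) % 2 = 0 := by omega
    have h11 : (n.re % 8 + n.im % 8) % 4 = 1 := by omega
    rw [h8, h9]
    clear h8 h9 h3 hn
    generalize n.re % 8 = x at *
    generalize n.im % 8 = y at *
    interval_cases x <;> interval_cases y <;> omega
  unfold sg
  simp only [key]

variable {χ : GaussianInt → GaussianInt → ℤ}

lemma tchi_ig (hχ : IsQuadSym χ) {n : GaussianInt} (hn : IsPrimary n) (m : GaussianInt) :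
    tchi χ n (ig * m) = tchi χ n m := by
  have h := (quad_props hχ n (primary_odd hn)).2.2 m
  unfold tchi
  rw [h, sg_typeOne hn, psi1_ig, psi2_ig]
  split_ifs <;> push_cast <;> ring

lemma tchi_even (n m : GaussianInt) (h : ωg ∣ m) : tchi χ n m = 0 := by
  unfold tchi
  rw [psi1_even m h, psi2_even m h]; simp

lemma tchi_per (hχ : IsQuadSym χ) {n : GaussianInt} (hn : IsPrimary n) (a b : GaussianInt)
    (h : 2 * n ∣ a - b) : tchi χ n a = tchi χ n b := by
  unfold tchi
  rw [(quad_props hχ n (primary_odd hn)).1 a b ((dvd_mul_left _ _).trans h),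
    psi1_per a b ((dvd_mul_right _ _).trans h), psi2_per a b ((dvd_mul_right _ _).trans h)]

lemma tchi_norm (hχ : IsQuadSym χ) {n : GaussianInt} (hn : IsPrimary n) (m : GaussianInt) :
    ‖tchi χ n m‖ ≤ 1 := by
  have h := (quad_props hχ n (primary_odd hn)).2.1 m
  unfold tchi
  rw [norm_mul]
  refine mul_le_one₀ ?_ (norm_nonneg _) ?_
  · split_ifs
    · exact psi1_norm m
    · exact psi2_norm m
  · rw [Complex.norm_intCast]; exact_mod_cast h

/-- powers of `i` -/
def ip (j : Fin 4) (m : GaussianInt) : GaussianInt := ig ^ (j : ℕ) * m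

lemma ip_coords (j : Fin 4) (m : GaussianInt) : ip j m =
    if j = 0 then m else if j = 1 then ⟨-m.im, m.re⟩ else if j = 2 then ⟨-m.re, -m.im⟩
      else ⟨m.im, -m.re⟩ := by
  unfold ip
  fin_cases j
  · simp
  · apply Zsqrtd.ext <;> simp [ig]
  · apply Zsqrtd.ext <;> simp [ig_sq]
  · have : ig ^ 3 = ⟨0, -1⟩ := by rw [pow_three]; rfl
    apply Zsqrtd.ext <;> simp [this]

lemma primary_sum {φ : GaussianInt → ℂ} (hig : ∀ m, φ (ig * m) = φ m)
    (hev : ∀ m, ωg ∣ m → φ m = 0) (hb : ∀ m, ‖φ m‖ ≤ 1) {s : ℂ} (hs : 1 < s.re) :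
    ∑' m, φ m / (Nm m : ℂ) ^ s =
      4 * ∑' m : {m : GaussianInt // IsPrimary m}, φ m.1 / (Nm m.1 : ℂ) ^ s := by
  set e : Fin 4 × {m : GaussianInt // IsPrimary m} → GaussianInt := fun p => ip p.1 p.2.1 with he
  have hinj : Function.Injective e := by
    rintro ⟨j, m, hm⟩ ⟨j', m', hm'⟩ h
    rw [primary_iff] at hm hm'
    simp only [he, ip_coords] at h
    have key : j = j' ∧ m = m' := by
      have h1 := congrArg Zsqrtd.re h
      have h2 := congrArg Zsqrtd.im h
      rw [Zsqrtd.ext_iff]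
      fin_cases j <;> fin_cases j' <;> simp at h1 h2 ⊢ <;> omega
    obtain ⟨rfl, rfl⟩ := key
    rfl
  have hsupp : Function.support (fun m => φ m / (Nm m : ℂ) ^ s) ⊆ Set.range e := by
    intro m hm
    have ho : ¬ ωg ∣ m := fun h => hm (by simp [hev m h])
    rw [omega_dvd_iff] at ho
    have hcase : IsPrimary m ∨ IsPrimary ⟨m.im, -m.re⟩ ∨ IsPrimary ⟨-m.re, -m.im⟩ ∨
        IsPrimary ⟨-m.im, m.re⟩ := by
      simp only [primary_iff]; omega
    rcases hcase with h | h | h | h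
    · exact ⟨(0, ⟨_, h⟩), by simp [he, ip_coords]⟩
    · exact ⟨(1, ⟨_, h⟩), by simp [he, ip_coords]⟩
    · exact ⟨(2, ⟨_, h⟩), by simp [he, ip_coords]⟩
    · exact ⟨(3, ⟨_, h⟩), by simp [he, ip_coords]⟩
  rw [← hinj.tsum_eq hsupp]
  have hsm := (summable_phi 1 hb hs).comp_injective hinj
  have hpow : ∀ (j : ℕ) (m : GaussianInt), φ (ig ^ j * m) = φ m ∧ Nm (ig ^ j * m) = Nm m := by
    intro j m
    induction j with
    | zero => simp
    | succ k ih =>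
      rw [pow_succ', mul_assoc, hig, ih.1]
      refine ⟨rfl, ?_⟩
      rw [← ih.2]
      simp only [Nm, Zsqrtd.norm_mul ig]
      simp [ig, Zsqrtd.norm_def]
  have h2 : ∀ p, φ (e p) / (Nm (e p) : ℂ) ^ s = φ p.2.1 / (Nm p.2.1 : ℂ) ^ s := by
    intro p
    simp only [he, ip]
    rw [(hpow _ _).1, (hpow _ _).2]
  have h3 := hsm.tsum_prod
  simp only [Function.comp] at h3
  rw [h3]
  simp only [h2]
  rw [tsum_fintype]
  simp

end Arith

/-- the functional equation of Proposition 2.3 of the paper.  For primary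
non-square `n`, the Hecke `L`-function of `χ̃_n` (given by its Dirichlet series for
`Re s > 1` and entire) satisfies, on a half-plane where the Gauss-sum series converges
(hence as an identity of meromorphic functions),
`L(s, χ̃_n) = N(2n)^{−s} π^{−(1−2s)} (Γ(1−s)/(4Γ(s))) ∑_{k ≠ 0} g(k, χ̃_n)/N(k)^{1−s}`. -/
theorem functional_equation_tilde_chi
    (χ : GaussianInt → GaussianInt → ℤ) (hχ : IsQuadSym χ)
    (n : GaussianInt) (hn : IsPrimary n) (hns : ¬ ∃ m : GaussianInt, n = m ^ 2)
    (g : GaussianInt → ℂ) (hg : IsGaussSumChar (2 * n) (tchi χ n) g)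
    (Lt : ℂ → ℂ)
    (hser : ∀ s : ℂ, 1 < s.re →
      Lt s = ∑' m : {m : GaussianInt // IsPrimary m}, tchi χ n m.1 / (Nm m.1 : ℂ) ^ s)
    (hdiff : Differentiable ℂ Lt) :
    ∀ s : ℂ, s.re < 0 →
      Lt s = (Nm (2 * n) : ℂ) ^ (-s) * (Real.pi : ℂ) ^ (-(1 - 2 * s)) *
          (Complex.Gamma (1 - s) / (4 * Complex.Gamma s)) *
          ∑' k : {k : GaussianInt // k ≠ 0}, g k.1 / (Nm k.1 : ℂ) ^ (1 - s) := by
  have hn0 : n ≠ 0 := by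
    rintro rfl
    exact primary_odd hn (dvd_zero _)
  have hq : (2 * n : GaussianInt) ≠ 0 := mul_ne_zero two_ne_zero hn0
  have : Finite (Rq (2 * n)) := finite_Rq hq
  have : Fintype (Rq (2 * n)) := Fintype.ofFinite _
  intro s hs
  have hrinj : Function.Injective (rp (2 * n)) := fun r r' h => by
    rw [← rp_mk _ r, ← rp_mk _ r', h]
  have hgk : ∀ k, g k = ∑ r : Rq (2 * n), tchi χ n (rp (2 * n) r) *
      eT (GaussianInt.toComplex (k * rp (2 * n) r) / GaussianInt.toComplex (2 * n)) := by
    intro k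
    rw [hg k (Finset.univ.image (rp (2 * n))) ?_, Finset.sum_image (fun _ _ _ _ h => hrinj h)]
    intro z
    refine ⟨rp (2 * n) (Ideal.Quotient.mk _ z), ⟨by simp, ?_⟩, ?_⟩
    · rw [← mk_eq_iff, rp_mk]
    · rintro y ⟨hy, hd⟩
      obtain ⟨r, -, rfl⟩ := Finset.mem_image.1 hy
      rw [← mk_eq_iff, rp_mk] at hd
      rw [hd]
  rw [general_fe hq 1 (tchi_norm hχ hn) (tchi_per hχ hn) Lt hdiff (fun z hz => by
    rw [primary_sum (tchi_ig hχ hn) (fun m h => tchi_even n m h) (tchi_norm hχ hn) hz, hser z hz])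
    g hgk s hs]
  congr 1
  symm
  refine Function.Injective.tsum_eq (f := fun k : GaussianInt => g k / (Nm k : ℂ) ^ (1 - s))
    (g := fun k : {k : GaussianInt // k ≠ 0} => k.1) Subtype.val_injective ?_
  intro k hk
  refine ⟨⟨k, ?_⟩, rfl⟩
  rintro rfl
  apply hk
  have h1 : (1 - s) ≠ 0 := fun h => by
    have := congrArg Complex.re h
    simp at this; linarith
  simp [Nm_zero, Complex.zero_cpow h1]
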